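/- Let p ∈ (1;2) and α ∈ (p−1; 1). There exists a constant C > 0 depending only on p and α such that the following holds. Let a < b, y₀ ∈ ℝ, let x : [a;b] → ℝ be continuous with finite p-variation, let F : ℝ → ℝ satisfy |F(u) − F(v)| ≤ K·|u − v|^α for all u, v ∈ ℝ with K ≥ 0, and let f : [a;b] → ℝ have finite p-variation. Then for every t ∈ [a;b] the Riemann–Stieltjes integral ∫_a^t F(f(s)) dx(s) exists, the function Tf : [a;b] → ℝ, Tf(t) := y₀ + ∫_a^t F(f(s)) dx(s), has finite p-variation, and |Tf(a)| + ‖Tf‖_{p-var,[a;b]} ≤ C·K·‖x‖_{p-var,[a;b]}·( |f(a)| + ‖f‖_{p-var,[a;b]} )^α + |y₀| + |F(0)|·‖x‖_{p-var,[a;b]}. -/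

import Mathlib

open Filter Set

/-- Truncated variation of `f` on `[a;b]` with truncation parameter `δ`. -/
noncomputable def truncVar (f : ℝ → ℝ) (δ a b : ℝ) : ENNReal :=
  ⨆ (n : ℕ) (t : Fin (n + 1) → ℝ) (_ : StrictMono t)
    (_ : ∀ i, t i ∈ Set.Icc a b),
    ∑ i : Fin n, ENNReal.ofReal (|f (t i.succ) - f (t i.castSucc)| - δ)

/-- p-variation of `f` on `[a;b]`. -/
noncomputable def pVar (f : ℝ → ℝ) (p a b : ℝ) : ENNReal :=
  ⨆ (n : ℕ) (t : Fin (n + 1) → ℝ) (_ : StrictMono t)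
    (_ : ∀ i, t i ∈ Set.Icc a b),
    ∑ i : Fin n, ENNReal.ofReal (|f (t i.succ) - f (t i.castSucc)| ^ p)

/-- The p-variation norm `(V^p(f,[a;b]))^{1/p}`. -/
noncomputable def pVarNorm (f : ℝ → ℝ) (p a b : ℝ) : ℝ :=
  (pVar f p a b).toReal ^ (1 / p)

/-- Oscillation norm `sup_{a ≤ s < t ≤ b} |f t - f s|`. -/
noncomputable def oscNorm (f : ℝ → ℝ) (a b : ℝ) : ℝ :=
  sSup {x | ∃ s ∈ Set.Icc a b, ∃ t ∈ Set.Icc a b, s < t ∧ x = |f t - f s|}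

/-- Sup norm `sup_{a ≤ t ≤ b} |f t|`. -/
noncomputable def supNorm (f : ℝ → ℝ) (a b : ℝ) : ℝ :=
  sSup {x | ∃ t ∈ Set.Icc a b, x = |f t|}

/-- `I` is the Riemann–Stieltjes integral `∫_a^b f dg`. -/
def RSIntegral (f g : ℝ → ℝ) (a b : ℝ) (I : ℝ) : Prop :=
  ∀ ε > (0 : ℝ), ∃ δ > (0 : ℝ), ∀ (n : ℕ) (t : Fin (n + 1) → ℝ) (ξ : Fin n → ℝ),
    StrictMono t → t 0 = a → t (Fin.last n) = b →
    (∀ i : Fin n, t i.castSucc ≤ ξ i ∧ ξ i ≤ t i.succ) →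
    (∀ i : Fin n, t i.succ - t i.castSucc < δ) →
    |∑ i : Fin n, f (ξ i) * (g (t i.succ) - g (t i.castSucc)) - I| < ε

/-- `f` is regulated on `[a;b]`: all the relevant one-sided limits exist and are finite. -/
def Regulated (f : ℝ → ℝ) (a b : ℝ) : Prop :=
  (∃ L : ℝ, Tendsto f (nhdsWithin a (Set.Ioi a)) (nhds L)) ∧
  (∃ L : ℝ, Tendsto f (nhdsWithin b (Set.Iio b)) (nhds L)) ∧
  ∀ x ∈ Set.Ioo a b,
    (∃ L : ℝ, Tendsto f (nhdsWithin x (Set.Iio x)) (nhds L)) ∧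
    (∃ L : ℝ, Tendsto f (nhdsWithin x (Set.Ioi x)) (nhds L))

/-- `f` and `g` have no common points of discontinuity on `[a;b]`. -/
def NoCommonDiscont (f g : ℝ → ℝ) (a b : ℝ) : Prop :=
  ∀ x ∈ Set.Icc a b,
    ContinuousWithinAt f (Set.Icc a b) x ∨ ContinuousWithinAt g (Set.Icc a b) x

/-!
On every subinterval the increment of `∫ g dx` is compared with the one-term sum
`g s * (x t - x s)`. Adding a point `v` to `[u;w]` changes that sum by `(g v - g u) * (x w - x v)`,
which is bounded by a product `U ^ β * V ^ γ` of powers of the two variations. When `β + γ > 1` this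
is the power `θ = β + γ` of a superadditive function of the interval, so by halving that function
rather than the interval all Riemann sums stay within a constant multiple of it (Young's
inequality), and an integral exists as a limit of such sums. Here `g = F ∘ f`, `β = 1 / p` and
`γ = α / p`.
-/

section Control

variable {T E : Type*} [Preorder T] [SeminormedAddCommGroup E]
  {U V W : T → T → ℝ} {a b s t u v : T} {α β γ θ K L : ℝ}

/-- A control on `[a;b]`: a nonnegative superadditive function of the subintervals `[s;t]`, such as
`t - s` or the `p`-variation of a function on `[s;t]`. No continuity is required. -/
structure IsControl (W : T → T → ℝ) (a b : T) : Prop where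
  nonneg : ∀ ⦃s t⦄, a ≤ s → s ≤ t → t ≤ b → 0 ≤ W s t
  add_le : ∀ ⦃s u t⦄, a ≤ s → s ≤ u → u ≤ t → t ≤ b → W s u + W u t ≤ W s t

/-- Hölder continuity with exponent `β` and constant `L` of `f` on `[a;b]`, with the control `W`
in place of the length of an interval. -/
def IsControlHolder (f : T → E) (W : T → T → ℝ) (L β : ℝ) (a b : T) : Prop :=
  ∀ ⦃s t⦄, a ≤ s → s ≤ t → t ≤ b → ‖f t - f s‖ ≤ L * W s t ^ β

lemma IsControl.restrict (hW : IsControl W a b) (has : a ≤ s) (htb : t ≤ b) : IsControl W s t where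
  nonneg _ _ hsu huv hvt := hW.nonneg (has.trans hsu) huv (hvt.trans htb)
  add_le _ _ _ hsu huv hvw hwt := hW.add_le (has.trans hsu) huv hvw (hwt.trans htb)

lemma IsControlHolder.restrict {f : T → E} (hf : IsControlHolder f W L β a b) (has : a ≤ s)
    (htb : t ≤ b) : IsControlHolder f W L β s t :=
  fun _ _ hsu huv hvt => hf (has.trans hsu) huv (hvt.trans htb)

lemma IsControl.mono (hW : IsControl W a b) (has : a ≤ s) (hsu : s ≤ u) (huv : u ≤ v)
    (hvt : v ≤ t) (htb : t ≤ b) : W u v ≤ W s t := by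
  have hut := huv.trans hvt
  linarith [hW.add_le has hsu hut htb, hW.add_le (has.trans hsu) huv hvt htb,
    hW.nonneg has hsu (hut.trans htb), hW.nonneg (has.trans (hsu.trans huv)) hvt htb]

lemma IsControl.self_eq_zero (hW : IsControl W a b) (has : a ≤ s) (hsb : s ≤ b) : W s s = 0 := by
  linarith [hW.add_le has le_rfl le_rfl hsb, hW.nonneg has le_rfl hsb]

lemma IsControl.sum_le (hW : IsControl W a b) {n : ℕ} {τ : Fin (n + 1) → T} (hτ : Monotone τ)
    (hmem : ∀ i, τ i ∈ Set.Icc a b) : ∑ i : Fin n, W (τ i.castSucc) (τ i.succ) ≤ W a b := by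
  suffices ∑ i : Fin n, W (τ i.castSucc) (τ i.succ) ≤ W (τ 0) (τ (Fin.last n)) from
    this.trans (hW.mono le_rfl (hmem 0).1 (hτ (Fin.zero_le _)) (hmem (Fin.last n)).2 le_rfl)
  induction n with
  | zero => simpa using hW.nonneg (hmem 0).1 le_rfl (hmem 0).2
  | succ n ih =>
    have hinit : ∑ i : Fin n, W (τ i.castSucc.castSucc) (τ i.succ.castSucc) ≤
        W (τ 0) (τ (Fin.last n).castSucc) :=
      ih (hτ.comp Fin.strictMono_castSucc.monotone) fun i => hmem i.castSucc
    have hlast := hW.add_le (hmem 0).1 (hτ (Fin.zero_le (Fin.last n).castSucc))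
      (hτ (Fin.le_last _)) (hmem (Fin.last (n + 1))).2
    simpa only [Fin.sum_univ_castSucc, Fin.succ_castSucc, Fin.succ_last] using
      (add_le_add_left hinit _).trans hlast

lemma rpow_mul_rpow_div_rpow_add {x y : ℝ} (hx : 0 ≤ x) (hy : 0 ≤ y) (hβγ : β + γ ≠ 0) :
    (x ^ (β / (β + γ)) * y ^ (γ / (β + γ))) ^ (β + γ) = x ^ β * y ^ γ := by
  rw [Real.mul_rpow (by positivity) (by positivity), ← Real.rpow_mul hx, ← Real.rpow_mul hy,
    div_mul_cancel₀ _ hβγ, div_mul_cancel₀ _ hβγ]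

lemma rpow_mul_rpow_add_le_of_add_eq_one {x y x' y' : ℝ} (hx : 0 ≤ x) (hy : 0 ≤ y) (hx' : 0 ≤ x')
    (hy' : 0 ≤ y') (hβ : 0 < β) (hγ : 0 < γ) (hβγ : β + γ = 1) :
    x ^ β * y ^ γ + x' ^ β * y' ^ γ ≤ (x + x') ^ β * (y + y') ^ γ := by
  have holder := Real.inner_le_Lp_mul_Lq_of_nonneg Finset.univ (f := ![x ^ β, x' ^ β])
    (g := ![y ^ γ, y' ^ γ]) (Real.HolderConjugate.inv_inv hβ hγ hβγ)
    (by simp [Fin.forall_fin_two, Real.rpow_nonneg, hx, hx'])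
    (by simp [Fin.forall_fin_two, Real.rpow_nonneg, hy, hy'])
  simpa [Real.rpow_rpow_inv, hx, hy, hx', hy', hβ.ne', hγ.ne'] using holder

lemma rpow_mul_rpow_add_le {x y x' y' : ℝ} (hx : 0 ≤ x) (hy : 0 ≤ y) (hx' : 0 ≤ x')
    (hy' : 0 ≤ y') (hβ : 0 < β) (hγ : 0 < γ) (hβγ : 1 ≤ β + γ) :
    x ^ β * y ^ γ + x' ^ β * y' ^ γ ≤ (x + x') ^ β * (y + y') ^ γ := by
  have hpos : 0 < β + γ := by positivity
  rw [← rpow_mul_rpow_div_rpow_add hx hy hpos.ne', ← rpow_mul_rpow_div_rpow_add hx' hy' hpos.ne',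
    ← rpow_mul_rpow_div_rpow_add (add_nonneg hx hx') (add_nonneg hy hy') hpos.ne']
  refine (Real.add_rpow_le_rpow_add (by positivity) (by positivity) hβγ).trans ?_
  gcongr
  exact rpow_mul_rpow_add_le_of_add_eq_one hx hy hx' hy' (by positivity) (by positivity)
    (by rw [← add_div, div_self hpos.ne'])

lemma IsControl.rpow_mul_rpow (hU : IsControl U a b) (hV : IsControl V a b) (hβ : 0 < β)
    (hγ : 0 < γ) (hβγ : 1 ≤ β + γ) : IsControl (fun s t => U s t ^ β * V s t ^ γ) a b where
  nonneg s t has hst htb := by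
    have := hU.nonneg has hst htb
    have := hV.nonneg has hst htb
    positivity
  add_le s u t has hsu hut htb := by
    have hUsu := hU.nonneg has hsu (hut.trans htb)
    have hVsu := hV.nonneg has hsu (hut.trans htb)
    have hUut := hU.nonneg (has.trans hsu) hut htb
    have hVut := hV.nonneg (has.trans hsu) hut htb
    have hUst := hU.add_le has hsu hut htb
    have hVst := hV.add_le has hsu hut htb
    have := hU.nonneg has (hsu.trans hut) htb
    refine (rpow_mul_rpow_add_le hUsu hVsu hUut hVut hβ hγ hβγ).trans ?_
    gcongr

lemma IsControlHolder.interpolate {f : T → E} {η l : ℝ} (hf : IsControlHolder f W L β a b)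
    (hW : IsControl W a b) (hL : 0 ≤ L) (hl0 : 0 ≤ l) (hl1 : l ≤ 1)
    (hη : ∀ ⦃s t⦄, a ≤ s → s ≤ t → t ≤ b → ‖f t - f s‖ ≤ η) :
    IsControlHolder f W (η ^ (1 - l) * L ^ l) (β * l) a b := by
  intro s t has hst htb
  have hWst := hW.nonneg has hst htb
  have h1l : 0 ≤ 1 - l := sub_nonneg.2 hl1
  have hη0 : 0 ≤ η := (norm_nonneg _).trans (hη has hst htb)
  calc ‖f t - f s‖ = ‖f t - f s‖ ^ (1 - l) * ‖f t - f s‖ ^ l := by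
        rw [← Real.rpow_add_of_nonneg (norm_nonneg _) h1l hl0, sub_add_cancel, Real.rpow_one]
    _ ≤ η ^ (1 - l) * (L * W s t ^ β) ^ l := by
        gcongr
        exacts [hη has hst htb, hf has hst htb]
    _ = η ^ (1 - l) * L ^ l * W s t ^ (β * l) := by
        rw [Real.mul_rpow hL (by positivity), ← Real.rpow_mul hWst, mul_assoc]

lemma IsControlHolder.comp {f : T → ℝ} {F : ℝ → ℝ} (hf : IsControlHolder f W L β a b)
    (hW : IsControl W a b) (hL : 0 ≤ L) (hα : 0 ≤ α) (hK : 0 ≤ K)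
    (hF : ∀ y z, |F y - F z| ≤ K * |y - z| ^ α) :
    IsControlHolder (fun s => F (f s)) W (K * L ^ α) (β * α) a b := by
  intro s t has hst htb
  have hWst := hW.nonneg has hst htb
  calc ‖F (f t) - F (f s)‖ ≤ K * ‖f t - f s‖ ^ α := hF _ _
    _ ≤ K * (L * W s t ^ β) ^ α := by gcongr; exact hf has hst htb
    _ = K * L ^ α * W s t ^ (β * α) := by
        rw [Real.mul_rpow hL (by positivity), ← Real.rpow_mul hWst, mul_assoc]

end Control

section Sewing

/-- `2 / (1 - 2 ^ (1 - θ))`, the constant of the sewing lemma for exponent `θ > 1`: the solution of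
`C = 2 ^ (1 - θ) * C + 2`. -/
noncomputable def sewingConst (θ : ℝ) : ℝ :=
  2 / (1 - 2 ^ (1 - θ))

lemma sewingConst_pos {θ : ℝ} (hθ : 1 < θ) : 0 < sewingConst θ :=
  div_pos two_pos <| sub_pos.2 <| Real.rpow_lt_one_of_one_lt_of_neg one_lt_two (sub_neg.2 hθ)

lemma two_mul_half_rpow_add_eq_sewingConst_mul {θ w : ℝ} (hθ : 1 < θ) (hw : 0 ≤ w) :
    2 * (sewingConst θ * (w / 2) ^ θ) + 2 * w ^ θ = sewingConst θ * w ^ θ := by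
  have hne : 1 - (2 : ℝ) ^ (1 - θ) ≠ 0 := (sub_pos.2 <|
    Real.rpow_lt_one_of_one_lt_of_neg one_lt_two (sub_neg.2 hθ)).ne'
  have hfix : sewingConst θ * 2 ^ (1 - θ) + 2 = sewingConst θ := by
    rw [sewingConst]
    field_simp
    ring
  have hhalf : 2 * (w / 2) ^ θ = 2 ^ (1 - θ) * w ^ θ := by
    rw [Real.div_rpow hw two_pos.le, Real.rpow_sub two_pos, Real.rpow_one]
    ring
  linear_combination sewingConst θ * hhalf + w ^ θ * hfix

/-- `B` bounds the distance of `Ξ s t` from all the Riemann sums of `Ξ` over partitions of `[s;t]`.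
Partitions are initial segments of monotone sequences, so that they may have repeated points. -/
def IsSewingBound {T E : Type*} [Preorder T] [SeminormedAddCommGroup E] (Ξ : T → T → E) (s t : T)
    (B : ℝ) : Prop :=
  ∀ (n : ℕ) (τ : ℕ → T), Monotone τ → τ 0 = s → τ n = t →
    ‖∑ k ∈ Finset.range n, Ξ (τ k) (τ (k + 1)) - Ξ s t‖ ≤ B

/-- The increments of `I` on the subintervals of `[a;b]` are as close to the germ `Ξ` as its Riemann
sums are. -/
def IsSewing {T E : Type*} [Preorder T] [SeminormedAddCommGroup E] (Ξ : T → T → E) (I : T → E)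
    (a b : T) : Prop :=
  ∀ ⦃s t⦄, a ≤ s → s ≤ t → t ≤ b → ∀ B, IsSewingBound Ξ s t B → ‖I t - I s - Ξ s t‖ ≤ B

lemma IsControl.exists_halving_index {T : Type*} [Preorder T] {W : T → T → ℝ} {n : ℕ} {τ : ℕ → T}
    (hτ : Monotone τ) (hW : IsControl W (τ 0) (τ n)) (hn : n ≠ 0) :
    ∃ k m, n = k + 1 + m ∧ W (τ 0) (τ k) ≤ W (τ 0) (τ n) / 2 ∧
      W (τ (k + 1)) (τ n) ≤ W (τ 0) (τ n) / 2 := by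
  have hWn := hW.nonneg le_rfl (hτ n.zero_le) le_rfl
  have hzero : W (τ 0) (τ 0) ≤ W (τ 0) (τ n) / 2 := by
    rw [hW.self_eq_zero le_rfl (hτ n.zero_le)]
    positivity
  set k := Nat.findGreatest (fun j => W (τ 0) (τ j) ≤ W (τ 0) (τ n) / 2) (n - 1) with hk
  have hkn : k ≤ n - 1 := Nat.findGreatest_le _
  refine ⟨k, n - (k + 1), by omega, Nat.findGreatest_spec (P := fun j => W (τ 0) (τ j) ≤ _)
    (n - 1).zero_le hzero, ?_⟩
  rcases (show k + 1 = n ∨ k + 1 ≤ n - 1 by omega) with hlast | hlt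
  · rw [hlast, hW.self_eq_zero (hτ n.zero_le) le_rfl]
    positivity
  · have hleft : W (τ 0) (τ n) / 2 < W (τ 0) (τ (k + 1)) :=
      not_le.1 (Nat.findGreatest_is_greatest (hk ▸ k.lt_succ_self) hlt)
    linarith [hW.add_le le_rfl (hτ (k + 1).zero_le) (hτ (show k + 1 ≤ n by omega)) le_rfl]

lemma norm_sum_range_sub_le {T E : Type*} [SeminormedAddCommGroup E] {Ξ : T → T → E} {τ : ℕ → T}
    {k m : ℕ} {A B : ℝ}
    (hleft : ‖∑ j ∈ Finset.range k, Ξ (τ j) (τ (j + 1)) - Ξ (τ 0) (τ k)‖ ≤ A)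
    (hright : ‖∑ j ∈ Finset.range m, Ξ (τ (k + 1 + j)) (τ (k + 1 + j + 1)) -
      Ξ (τ (k + 1)) (τ (k + 1 + m))‖ ≤ A)
    (hinner : ‖Ξ (τ 0) (τ k) + Ξ (τ k) (τ (k + 1)) - Ξ (τ 0) (τ (k + 1))‖ ≤ B)
    (houter : ‖Ξ (τ 0) (τ (k + 1)) + Ξ (τ (k + 1)) (τ (k + 1 + m)) - Ξ (τ 0) (τ (k + 1 + m))‖ ≤ B) :
    ‖∑ j ∈ Finset.range (k + 1 + m), Ξ (τ j) (τ (j + 1)) - Ξ (τ 0) (τ (k + 1 + m))‖ ≤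
      2 * A + 2 * B := by
  have hsplit := norm_add₄_le.trans
    (add_le_add (add_le_add (add_le_add hleft hright) hinner) houter)
  rw [Finset.sum_range_add, Finset.sum_range_succ, two_mul, two_mul, ← add_assoc]
  refine (le_of_eq (congrArg norm ?_)).trans hsplit
  abel

/-- The partition is cut at the index where the control reaches half of its total, which leaves
one interval of the partition between two parts of control at most one half. -/
theorem IsControl.isSewingBound {T E : Type*} [Preorder T] [SeminormedAddCommGroup E]
    {W : T → T → ℝ} {Ξ : T → T → E} {s t : T} {M θ : ℝ} (hW : IsControl W s t) (hθ : 1 < θ)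
    (hM : 0 ≤ M)
    (hΞ : ∀ ⦃u v w⦄, s ≤ u → u ≤ v → v ≤ w → w ≤ t → ‖Ξ u v + Ξ v w - Ξ u w‖ ≤ M * W u w ^ θ) :
    IsSewingBound Ξ s t (sewingConst θ * (M * W s t ^ θ)) := by
  rintro n τ hτ rfl rfl
  have hC := (sewingConst_pos hθ).le
  induction n using Nat.strong_induction_on generalizing τ with
  | _ n ih =>
  rcases eq_or_ne n 0 with rfl | hn
  · have hself := hΞ le_rfl le_rfl le_rfl le_rfl
    rw [add_sub_cancel_right, hW.self_eq_zero le_rfl le_rfl, Real.zero_rpow (by linarith),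
      mul_zero] at hself
    rw [Finset.sum_range_zero, zero_sub, norm_neg, hW.self_eq_zero le_rfl le_rfl,
      Real.zero_rpow (by linarith), mul_zero, mul_zero]
    exact hself
  obtain ⟨k, m, rfl, hWl, hWr⟩ := hW.exists_halving_index hτ hn
  have h0k : τ 0 ≤ τ k := hτ k.zero_le
  have hkk : τ k ≤ τ (k + 1) := hτ k.le_succ
  have hkn : τ (k + 1) ≤ τ (k + 1 + m) := hτ (Nat.le_add_right _ _)
  have hleft := ih k (by omega) τ hτ (hW.restrict le_rfl (hkk.trans hkn))
    fun _ _ _ hu huv hvw hw => hΞ hu huv hvw (hw.trans (hkk.trans hkn))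
  have hright := ih m (by omega) (fun j => τ (k + 1 + j)) (fun _ _ hij => hτ (by gcongr))
    (hW.restrict (h0k.trans hkk) le_rfl)
    fun _ _ _ hu huv hvw hw => hΞ ((h0k.trans hkk).trans hu) huv hvw hw
  have hinner := hΞ le_rfl h0k hkk hkn
  have houter := hΞ le_rfl (h0k.trans hkk) hkn le_rfl
  have hWinner := hW.mono le_rfl le_rfl (h0k.trans hkk) hkn le_rfl
  have hW0 := hW.nonneg le_rfl (h0k.trans (hkk.trans hkn)) le_rfl
  have hWl0 := hW.nonneg le_rfl h0k (hkk.trans hkn)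
  have hWr0 := hW.nonneg (h0k.trans hkk) hkn le_rfl
  have hWi0 := hW.nonneg le_rfl (h0k.trans hkk) hkn
  set w := W (τ 0) (τ (k + 1 + m))
  calc _ ≤ 2 * (sewingConst θ * (M * (w / 2) ^ θ)) + 2 * (M * w ^ θ) :=
        norm_sum_range_sub_le (hleft.trans (by gcongr)) (hright.trans (by gcongr))
          (hinner.trans (by gcongr)) houter
    _ = M * (2 * (sewingConst θ * (w / 2) ^ θ) + 2 * w ^ θ) := by ring
    _ = sewingConst θ * (M * w ^ θ) := by
        rw [two_mul_half_rpow_add_eq_sewingConst_mul hθ hW0]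
        ring

lemma exists_monotone_nat_enumeration {T : Type*} [LinearOrder T] {A : Finset T}
    (hA : A.Nonempty) : ∃ τ : ℕ → T, Monotone τ ∧ ∀ s ∈ A, ∃ k, τ k = s := by
  obtain ⟨m, hm⟩ := Nat.exists_eq_add_one_of_ne_zero hA.card_ne_zero
  refine ⟨fun k => A.orderEmbOfFin hm (Fin.clamp k m),
    (A.orderEmbOfFin hm).monotone.comp Fin.clamp_monotone, fun s hs => ?_⟩
  obtain ⟨k, rfl⟩ : s ∈ Set.range (A.orderEmbOfFin hm) := by rwa [Finset.range_orderEmbOfFin]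
  exact ⟨k, congrArg _ (Fin.ext (min_eq_left (Nat.lt_succ_iff.1 k.isLt)))⟩

lemma exists_sewing_on_finset {T E : Type*} [LinearOrder T] [SeminormedAddCommGroup E]
    (Ξ : T → T → E) (A : Finset T) : ∃ I : T → E, ∀ s ∈ A, ∀ t ∈ A, s ≤ t →
      ∀ B, IsSewingBound Ξ s t B → ‖I t - I s - Ξ s t‖ ≤ B := by
  rcases A.eq_empty_or_nonempty with rfl | hA
  · exact ⟨0, by simp⟩
  obtain ⟨τ, hτ, hτA⟩ := exists_monotone_nat_enumeration hA
  choose! k hk using hτA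
  refine ⟨fun s => ∑ j ∈ Finset.range (k s), Ξ (τ j) (τ (j + 1)), fun s hs t ht hst B hB => ?_⟩
  have hkst : k s ≤ k t := by
    rcases hst.eq_or_lt with rfl | hlt
    · rfl
    · exact (hτ.reflect_lt (by rwa [hk s hs, hk t ht])).le
  rw [← Finset.sum_Ico_eq_sub _ hkst, Finset.sum_Ico_eq_sum_range]
  exact hB (k t - k s) (fun j => τ (k s + j)) (fun _ _ hij => hτ (by gcongr)) (hk s hs)
    (by simp only [Nat.add_sub_cancel' hkst, hk t ht])

/-- The Riemann sums along finite sets of points are bounded, hence converge along an ultrafilter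
finer than refinement; the limit inherits the bounds. -/
theorem exists_isSewing {T E : Type*} [LinearOrder T] [NormedAddCommGroup E] [ProperSpace E]
    {Ξ : T → T → E} {a b : T}
    (hΞ : ∀ t ∈ Set.Icc a b, ∃ B, IsSewingBound Ξ a t B) : ∃ I : T → E, IsSewing Ξ I a b := by
  choose J hJ using exists_sewing_on_finset Ξ
  let 𝒰 : Ultrafilter (Finset T) := Ultrafilter.of atTop
  have hmem (s : T) : ∀ᶠ A in (𝒰 : Filter (Finset T)), s ∈ A := Ultrafilter.of_le atTop <|
    (eventually_ge_atTop ({s} : Finset T)).mono fun _ => Finset.singleton_subset_iff.1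
  have hlim : ∀ t ∈ Set.Icc a b, ∃ y, Tendsto (fun A => J A t - J A a) 𝒰 (nhds y) := by
    intro t ht
    obtain ⟨B, hB⟩ := hΞ t ht
    have hball : ∀ᶠ A in (𝒰 : Filter (Finset T)), J A t - J A a ∈ Metric.closedBall (Ξ a t) B := by
      filter_upwards [hmem a, hmem t] with A haA htA
      exact mem_closedBall_iff_norm.2 (hJ A a haA t htA ht.1 B hB)
    obtain ⟨y, -, hy⟩ := (isCompact_closedBall (Ξ a t) B).ultrafilter_le_nhds
      (𝒰.map fun A => J A t - J A a) (le_principal_iff.2 hball)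
    exact ⟨y, hy⟩
  choose! I hI using hlim
  refine ⟨I, fun s t has hst htb B hB => ?_⟩
  have hdiff := ((hI t ⟨has.trans hst, htb⟩).sub (hI s ⟨has, hst.trans htb⟩)).sub_const (Ξ s t)
  refine le_of_tendsto hdiff.norm ?_
  filter_upwards [hmem s, hmem t] with A hsA htA
  rw [sub_sub_sub_cancel_right]
  exact hJ A s hsA t htA hst B hB

end Sewing

section PVariation

variable {f : ℝ → ℝ} {p a b s u v z t A : ℝ} {n : ℕ}

/-- The sum whose supremum over the increasing finite sequences `τ` in `[a;b]` is `pVar f p a b`. -/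
noncomputable def variationSum (f : ℝ → ℝ) (p : ℝ) (τ : Fin (n + 1) → ℝ) : ENNReal :=
  ∑ i : Fin n, ENNReal.ofReal (|f (τ i.succ) - f (τ i.castSucc)| ^ p)

lemma variationSum_le_pVar {τ : Fin (n + 1) → ℝ} (hτ : StrictMono τ) (hmem : ∀ i, τ i ∈ Icc a b) :
    variationSum f p τ ≤ pVar f p a b :=
  le_iSup₂_of_le n τ (le_iSup₂_of_le hτ hmem le_rfl)

lemma pVar_mono (hsu : s ≤ u) (hvt : v ≤ t) : pVar f p u v ≤ pVar f p s t :=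
  iSup₂_le fun _ _ => iSup₂_le fun hτ hmem =>
    variationSum_le_pVar hτ fun i => Icc_subset_Icc hsu hvt (hmem i)

lemma add_pVar_le {c B : ENNReal} (hab : a ≤ b) (h : ∀ (n : ℕ) (τ : Fin (n + 1) → ℝ), StrictMono τ →
    (∀ i, τ i ∈ Icc a b) → c + variationSum f p τ ≤ B) : c + pVar f p a b ≤ B := by
  have hc : c ≤ B := by
    simpa [variationSum] using
      h 0 (fun _ => a) (Subsingleton.strictMono (α := Fin 1) _) fun _ => left_mem_Icc.2 hab
  rcases eq_or_ne c ⊤ with rfl | hc'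
  · rw [top_le_iff.1 hc]
    exact le_top
  · exact (add_le_add_right (iSup₂_le fun n τ => iSup₂_le fun hτ hmem =>
      ENNReal.le_sub_of_add_le_left hc' (h n τ hτ hmem)) c).trans (add_tsub_cancel_of_le hc).le

lemma variationSum_snoc (τ : Fin (n + 1) → ℝ) (z : ℝ) :
    variationSum f p (Fin.snoc (α := fun _ => ℝ) τ z) =
      variationSum f p τ + ENNReal.ofReal (|f z - f (τ (Fin.last n))| ^ p) := by
  simp only [variationSum, Fin.sum_univ_castSucc, Fin.succ_castSucc, Fin.succ_last,
    Fin.snoc_castSucc, Fin.snoc_last]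

lemma exists_variationSum_eq_add (hp : 0 < p) {τ : Fin (n + 1) → ℝ} (hτ : StrictMono τ)
    (hmem : ∀ i, τ i ∈ Icc a b) (hz : τ (Fin.last n) ≤ z) (hzb : z ≤ b) :
    ∃ (m : ℕ) (σ : Fin (m + 1) → ℝ), StrictMono σ ∧ (∀ i, σ i ∈ Icc a b) ∧ σ (Fin.last m) = z ∧
      variationSum f p σ =
        variationSum f p τ + ENNReal.ofReal (|f z - f (τ (Fin.last n))| ^ p) := by
  rcases hz.eq_or_lt with rfl | hlt
  · exact ⟨n, τ, hτ, hmem, rfl, by simp [Real.zero_rpow hp.ne']⟩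
  refine ⟨n + 1, Fin.snoc (α := fun _ => ℝ) τ z, Fin.strictMono_iff_lt_succ.2 ?_,
    Fin.forall_fin_succ'.2 ?_, Fin.snoc_last _ _, variationSum_snoc τ z⟩
  · refine Fin.forall_fin_succ'.2 ⟨fun i => ?_, ?_⟩
    · simpa only [Fin.succ_castSucc, Fin.snoc_castSucc] using hτ i.castSucc_lt_succ
    · simpa only [Fin.succ_last, Fin.snoc_castSucc, Fin.snoc_last] using hlt
  · simp only [Fin.snoc_castSucc, Fin.snoc_last]
    exact ⟨hmem, (hmem _).1.trans hz, hzb⟩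

lemma pVar_add_ofReal_le (hp : 0 < p) (hsv : s ≤ v) (hvz : v ≤ z) :
    pVar f p s v + ENNReal.ofReal (|f z - f v| ^ p) ≤ pVar f p s z := by
  rw [add_comm]
  refine add_pVar_le hsv fun n τ hτ hmem => ?_
  obtain ⟨m, σ, hσ, hσmem, hσv, hσsum⟩ :=
    exists_variationSum_eq_add (f := f) hp hτ hmem (hmem _).2 le_rfl
  obtain ⟨k, ρ, hρ, hρmem, -, hρsum⟩ :=
    exists_variationSum_eq_add (f := f) hp hσ (fun i => Icc_subset_Icc le_rfl hvz (hσmem i))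
      (hσv.le.trans hvz) le_rfl
  calc _ ≤ ENNReal.ofReal (|f z - f v| ^ p) + variationSum f p σ := by
        rw [hσsum]
        gcongr
        exact le_self_add
    _ = variationSum f p ρ := by rw [hρsum, hσv, add_comm]
    _ ≤ pVar f p s z := variationSum_le_pVar hρ hρmem

lemma pVar_add_pVar_le (hp : 0 < p) (hsu : s ≤ u) (hut : u ≤ t) :
    pVar f p s u + pVar f p u t ≤ pVar f p s t := by
  refine add_pVar_le hut fun n τ hτ hmem => ?_
  suffices pVar f p s u + variationSum f p τ ≤ pVar f p s (τ (Fin.last n)) from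
    this.trans (pVar_mono le_rfl (hmem _).2)
  induction n with
  | zero => simpa [variationSum] using pVar_mono le_rfl (hmem 0).1
  | succ n ih =>
    have hinit := ih (τ ∘ Fin.castSucc) (hτ.comp Fin.strictMono_castSucc) fun i => hmem i.castSucc
    have hlast := pVar_add_ofReal_le (f := f) hp (hsu.trans (hmem (Fin.last n).castSucc).1)
      (hτ.monotone (Fin.le_last (Fin.last n).castSucc))
    rw [variationSum, Fin.sum_univ_castSucc, ← add_assoc]
    exact (add_le_add_left hinit _).trans hlast

lemma isControl_pVar (hp : 0 < p) (hfin : pVar f p a b < ⊤) :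
    IsControl (fun s t => (pVar f p s t).toReal) a b where
  nonneg _ _ _ _ _ := ENNReal.toReal_nonneg
  add_le s u t has hsu hut htb := by
    have hst : pVar f p s t ≠ ⊤ := ((pVar_mono has htb).trans_lt hfin).ne
    rw [← ENNReal.toReal_add (ne_top_of_le_ne_top hst (pVar_mono le_rfl hut))
      (ne_top_of_le_ne_top hst (pVar_mono hsu le_rfl))]
    exact ENNReal.toReal_mono hst (pVar_add_pVar_le hp hsu hut)

lemma isControlHolder_pVar (hp : 0 < p) (hfin : pVar f p a b < ⊤) :
    IsControlHolder f (fun s t => (pVar f p s t).toReal) 1 (1 / p) a b := by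
  intro s t has hst htb
  have hle : |f t - f s| ^ p ≤ (pVar f p s t).toReal :=
    (ENNReal.ofReal_le_iff_le_toReal ((pVar_mono has htb).trans_lt hfin).ne).1
      (le_add_self.trans (pVar_add_ofReal_le hp le_rfl hst))
  rw [one_mul, one_div, Real.norm_eq_abs]
  exact (Real.le_rpow_inv_iff_of_pos (abs_nonneg _) ENNReal.toReal_nonneg hp).2 hle

lemma IsControlHolder.pVar_le {W : ℝ → ℝ → ℝ} (hf : IsControlHolder f W A (1 / p) a b)
    (hW : IsControl W a b) (hp : 0 < p) (hA : 0 ≤ A) :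
    pVar f p a b ≤ ENNReal.ofReal (A ^ p * W a b) := by
  refine iSup₂_le fun n τ => iSup₂_le fun hτ hmem => ?_
  have hterm (i : Fin n) : |f (τ i.succ) - f (τ i.castSucc)| ^ p ≤
      A ^ p * W (τ i.castSucc) (τ i.succ) := by
    have hlt := hτ i.castSucc_lt_succ
    have hWi := hW.nonneg (hmem i.castSucc).1 hlt.le (hmem i.succ).2
    calc |f (τ i.succ) - f (τ i.castSucc)| ^ p
        ≤ (A * W (τ i.castSucc) (τ i.succ) ^ (1 / p)) ^ p := by
          gcongr
          exact hf (hmem i.castSucc).1 hlt.le (hmem i.succ).2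
      _ = A ^ p * W (τ i.castSucc) (τ i.succ) := by
          rw [Real.mul_rpow hA (by positivity), one_div, Real.rpow_inv_rpow hWi hp.ne']
  rw [← ENNReal.ofReal_sum_of_nonneg fun i _ => by positivity]
  refine ENNReal.ofReal_le_ofReal ((Finset.sum_le_sum fun i _ => hterm i).trans ?_)
  rw [← Finset.mul_sum]
  gcongr
  exact hW.sum_le hτ.monotone hmem

lemma IsControlHolder.pVarNorm_le {W : ℝ → ℝ → ℝ} (hf : IsControlHolder f W A (1 / p) a b)
    (hW : IsControl W a b) (hp : 0 < p) (hA : 0 ≤ A) (hab : a ≤ b) :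
    pVarNorm f p a b ≤ A * W a b ^ (1 / p) := by
  have hWab := hW.nonneg le_rfl hab le_rfl
  calc pVarNorm f p a b ≤ (A ^ p * W a b) ^ (1 / p) := by
        rw [pVarNorm]
        gcongr
        exact ENNReal.toReal_le_of_le_ofReal (by positivity) (hf.pVar_le hW hp hA)
    _ = A * W a b ^ (1 / p) := by
        rw [Real.mul_rpow (by positivity) hWab, one_div, Real.rpow_rpow_inv hA hp.ne']

end PVariation

section YoungIntegral

/-- The one-term left Riemann sum of `∫ g dx` over `[s;t]`. -/
def youngGerm {T R : Type*} [NonUnitalNonAssocRing R] (g x : T → R) (s t : T) : R :=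
  g s * (x t - x s)

theorem isSewingBound_youngGerm {T R : Type*} [Preorder T] [NonUnitalSeminormedRing R]
    {g x : T → R} {U V : T → T → ℝ} {s t : T} {L M β γ : ℝ} (hU : IsControl U s t)
    (hV : IsControl V s t) (hx : IsControlHolder x U L β s t) (hg : IsControlHolder g V M γ s t)
    (hL : 0 ≤ L) (hM : 0 ≤ M) (hβ : 0 < β) (hγ : 0 < γ) (hβγ : 1 < β + γ) (hst : s ≤ t) :
    IsSewingBound (youngGerm g x) s t
      (sewingConst (β + γ) * (L * M * (U s t ^ β * V s t ^ γ))) := by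
  have hpos : 0 < β + γ := by positivity
  have hW := hU.rpow_mul_rpow hV (div_pos hβ hpos) (div_pos hγ hpos)
    (by rw [← add_div, div_self hpos.ne'])
  rw [← rpow_mul_rpow_div_rpow_add (hU.nonneg le_rfl hst le_rfl) (hV.nonneg le_rfl hst le_rfl)
    hpos.ne']
  refine hW.isSewingBound hβγ (by positivity) fun u v w hsu huv hvw hwt => ?_
  have hUuw := hU.nonneg hsu (huv.trans hvw) hwt
  have hVuw := hV.nonneg hsu (huv.trans hvw) hwt
  have hUvw := hU.nonneg (hsu.trans huv) hvw hwt
  have hVuv := hV.nonneg hsu huv (hvw.trans hwt)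
  rw [rpow_mul_rpow_div_rpow_add hUuw hVuw hpos.ne']
  calc ‖youngGerm g x u v + youngGerm g x v w - youngGerm g x u w‖
      = ‖(g v - g u) * (x w - x v)‖ := by
        congr 1
        simp only [youngGerm]
        noncomm_ring
    _ ≤ M * V u v ^ γ * (L * U v w ^ β) := by
        refine (norm_mul_le _ _).trans ?_
        gcongr
        exacts [hg hsu huv (hvw.trans hwt), hx (hsu.trans huv) hvw hwt]
    _ ≤ M * V u w ^ γ * (L * U u w ^ β) := by
        gcongr
        exacts [hV.mono hsu le_rfl huv hvw hwt, hU.mono hsu huv hvw le_rfl hwt]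
    _ = L * M * (U u w ^ β * V u w ^ γ) := by ring

lemma IsSewing.restrict {T E : Type*} [Preorder T] [SeminormedAddCommGroup E] {Ξ : T → T → E}
    {I : T → E} {a b s t : T} (hI : IsSewing Ξ I a b) (has : a ≤ s) (htb : t ≤ b) :
    IsSewing Ξ I s t :=
  fun _ _ hsu huv hvt => hI (has.trans hsu) huv (hvt.trans htb)

lemma IsSewing.add_const {T E : Type*} [Preorder T] [SeminormedAddCommGroup E] {Ξ : T → T → E}
    {I : T → E} {a b : T} (hI : IsSewing Ξ I a b) (c : E) : IsSewing Ξ (fun t => I t + c) a b := by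
  simpa only [IsSewing, add_sub_add_right_eq_sub] using hI

lemma exists_pos_rpow_mul_le {r c ε : ℝ} (hr : 0 < r) (hc : 0 ≤ c) (hε : 0 < ε) :
    ∃ η > 0, η ^ r * c ≤ ε := by
  refine ⟨(ε / (c + 1)) ^ (1 / r), by positivity, ?_⟩
  rw [one_div, Real.rpow_inv_rpow (by positivity) hr.ne', div_mul_eq_mul_div, div_le_iff₀
    (by positivity)]
  gcongr
  linarith

variable {g x I : ℝ → ℝ} {U V W : ℝ → ℝ → ℝ} {a b s t ξ L M β γ : ℝ}

lemma IsSewing.abs_mul_sub_sub_le (hI : IsSewing (youngGerm g x) I s t) (hU : IsControl U s t)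
    (hV : IsControl V s t) (hx : IsControlHolder x U L β s t) (hg : IsControlHolder g V M γ s t)
    (hL : 0 ≤ L) (hM : 0 ≤ M) (hβ : 0 < β) (hγ : 0 < γ) (hβγ : 1 < β + γ) (hsξ : s ≤ ξ)
    (hξt : ξ ≤ t) :
    |g ξ * (x t - x s) - (I t - I s)| ≤
      (sewingConst (β + γ) + 1) * (L * M * (U s t ^ β * V s t ^ γ)) := by
  have hst := hsξ.trans hξt
  have hVsξ := hV.nonneg le_rfl hsξ hξt
  have hVsξ_le := hV.mono le_rfl le_rfl hsξ hξt le_rfl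
  have hVst := hVsξ.trans hVsξ_le
  have htag : |(g ξ - g s) * (x t - x s)| ≤ M * V s t ^ γ * (L * U s t ^ β) := by
    rw [abs_mul]
    gcongr
    · exact (hg le_rfl hsξ hξt).trans (by gcongr)
    · exact hx le_rfl hst le_rfl
  have hleft := hI le_rfl hst le_rfl _
    (isSewingBound_youngGerm hU hV hx hg hL hM hβ hγ hβγ hst)
  calc |g ξ * (x t - x s) - (I t - I s)|
      = |(g ξ - g s) * (x t - x s) - (I t - I s - youngGerm g x s t)| := by
        congr 1
        rw [youngGerm]
        ring
    _ ≤ _ := (abs_sub _ _).trans (add_le_add htag hleft)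
    _ = _ := by ring

lemma rsIntegral_of_abs_mul_sub_sub_le (hW : IsControl W a b) (hab : a ≤ b)
    (herr : ∀ ε > 0, ∃ δ > 0, ∀ ⦃s ξ t⦄, a ≤ s → s ≤ ξ → ξ ≤ t → t ≤ b → t - s < δ →
      |g ξ * (x t - x s) - (I t - I s)| ≤ ε * W s t) :
    RSIntegral g x a b (I b - I a) := by
  intro ε hε
  have hWab := hW.nonneg le_rfl hab le_rfl
  obtain ⟨δ, hδ, hδerr⟩ := herr (ε / (W a b + 1)) (by positivity)
  refine ⟨δ, hδ, ?_⟩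
  rintro n τ ξ hτ rfl rfl hξ hmesh
  have hmem (i : Fin (n + 1)) : τ i ∈ Icc (τ 0) (τ (Fin.last n)) :=
    ⟨hτ.monotone (Fin.zero_le i), hτ.monotone (Fin.le_last i)⟩
  have htelescope : I (τ (Fin.last n)) - I (τ 0) =
      ∑ i : Fin n, (I (τ i.succ) - I (τ i.castSucc)) := by
    rw [Finset.sum_sub_distrib]
    linear_combination (Fin.sum_univ_castSucc fun i => I (τ i)).symm.trans
      (Fin.sum_univ_succ fun i => I (τ i))
  set w := W (τ 0) (τ (Fin.last n))
  rw [htelescope, ← Finset.sum_sub_distrib]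
  calc _ ≤ ∑ i : Fin n, ε / (w + 1) * W (τ i.castSucc) (τ i.succ) :=
        (Finset.abs_sum_le_sum_abs _ _).trans <| Finset.sum_le_sum fun i _ =>
          hδerr (hmem _).1 (hξ i).1 (hξ i).2 (hmem _).2 (hmesh i)
    _ ≤ ε / (w + 1) * w := by
        rw [← Finset.mul_sum]
        gcongr
        exact hW.sum_le hτ.monotone hmem
    _ < ε := by
        rw [div_mul_eq_mul_div, div_lt_iff₀ (by positivity)]
        linarith

/-- Interpolating between the modulus of continuity of `x` and its control-Hölder bound lowers `β`
slightly and makes the Hölder constant small on short intervals. -/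
theorem IsSewing.rsIntegral (hI : IsSewing (youngGerm g x) I a b) (hab : a ≤ b)
    (hU : IsControl U a b) (hV : IsControl V a b) (hx : IsControlHolder x U L β a b)
    (hg : IsControlHolder g V M γ a b) (hL : 0 ≤ L) (hM : 0 ≤ M) (hβ : 0 < β) (hγ : 0 < γ)
    (hβγ : 1 < β + γ) (hxc : ContinuousOn x (Icc a b)) : RSIntegral g x a b (I b - I a) := by
  obtain ⟨l, hl, hl1⟩ : ∃ l, max 0 ((1 - γ) / β) < l ∧ l < 1 :=
    exists_between (max_lt one_pos ((div_lt_one hβ).2 (by linarith)))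
  obtain ⟨hl0, hlγ⟩ := max_lt_iff.1 hl
  have hlβγ : 1 < β * l + γ := by linarith [(div_lt_iff₀' hβ).1 hlγ]
  have hC := (sewingConst_pos hlβγ).le
  refine rsIntegral_of_abs_mul_sub_sub_le (hU.rpow_mul_rpow hV (by positivity) hγ hlβγ.le) hab
    fun ε hε => ?_
  obtain ⟨η, hη, hηε⟩ := exists_pos_rpow_mul_le (sub_pos.2 hl1)
    (c := (sewingConst (β * l + γ) + 1) * (L ^ l * M)) (by positivity) hε
  obtain ⟨δ, hδ, hxδ⟩ := Metric.uniformContinuousOn_iff_le.1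
    (isCompact_Icc.uniformContinuousOn_of_continuous hxc) η hη
  refine ⟨δ, hδ, fun s ξ t has hsξ hξt htb hts => ?_⟩
  have hst := hsξ.trans hξt
  have hosc : ∀ ⦃u v⦄, s ≤ u → u ≤ v → v ≤ t → ‖x v - x u‖ ≤ η := fun u v hsu huv hvt =>
    hxδ v ⟨has.trans (hsu.trans huv), hvt.trans htb⟩ u ⟨has.trans hsu, huv.trans (hvt.trans htb)⟩
      (abs_le.2 ⟨by linarith, by linarith⟩)
  have hUst := hU.restrict has htb
  have hVst := hV.restrict has htb
  have := hUst.nonneg le_rfl hst le_rfl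
  have := hVst.nonneg le_rfl hst le_rfl
  calc |g ξ * (x t - x s) - (I t - I s)|
      ≤ (sewingConst (β * l + γ) + 1) *
          (η ^ (1 - l) * L ^ l * M * (U s t ^ (β * l) * V s t ^ γ)) :=
        (hI.restrict has htb).abs_mul_sub_sub_le hUst hVst
          ((hx.restrict has htb).interpolate hUst hL hl0.le hl1.le hosc) (hg.restrict has htb)
          (by positivity) hM (by positivity) hγ hlβγ hsξ hξt
    _ = η ^ (1 - l) * ((sewingConst (β * l + γ) + 1) * (L ^ l * M)) *
          (U s t ^ (β * l) * V s t ^ γ) := by ring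
    _ ≤ ε * (U s t ^ (β * l) * V s t ^ γ) := by gcongr

theorem IsSewing.isControlHolder (hI : IsSewing (youngGerm g x) I a b)
    (hU : IsControl U a b) (hV : IsControl V a b) (hx : IsControlHolder x U L β a b)
    (hg : IsControlHolder g V M γ a b) (hL : 0 ≤ L) (hM : 0 ≤ M) (hβ : 0 < β) (hγ : 0 < γ)
    (hβγ : 1 < β + γ) :
    IsControlHolder I U (L * (|g a| + (sewingConst (β + γ) + 1) * (M * V a b ^ γ))) β a b := by
  intro s t has hst htb
  have hC := (sewingConst_pos hβγ).le
  have hUst := hU.nonneg has hst htb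
  have hVst := hV.nonneg has hst htb
  have hVas := hV.nonneg le_rfl has (hst.trans htb)
  have hVst_le := hV.mono le_rfl has hst htb le_rfl
  have hVas_le := hV.mono le_rfl le_rfl has (hst.trans htb) le_rfl
  have hVab := hVst.trans hVst_le
  have hgs : |g s| ≤ |g a| + M * V a b ^ γ := by
    have hinc : |g s - g a| ≤ M * V a b ^ γ :=
      (hg le_rfl has (hst.trans htb)).trans (by gcongr)
    linarith [abs_sub_abs_le_abs_sub (g s) (g a)]
  have herr := hI has hst htb _ (isSewingBound_youngGerm (hU.restrict has htb)
    (hV.restrict has htb) (hx.restrict has htb) (hg.restrict has htb) hL hM hβ hγ hβγ hst)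
  calc |I t - I s| = |youngGerm g x s t + (I t - I s - youngGerm g x s t)| := by
        rw [add_sub_cancel]
    _ ≤ |g s| * |x t - x s| + sewingConst (β + γ) * (L * M * (U s t ^ β * V s t ^ γ)) :=
        (abs_add_le _ _).trans (add_le_add (abs_mul _ _).le herr)
    _ ≤ (|g a| + M * V a b ^ γ) * (L * U s t ^ β) +
          sewingConst (β + γ) * (L * M * (U s t ^ β * V a b ^ γ)) := by
        gcongr
        exact hx has hst htb
    _ = _ := by ring

theorem exists_young_integral (hU : IsControl U a b) (hV : IsControl V a b)
    (hx : IsControlHolder x U L β a b) (hg : IsControlHolder g V M γ a b) (hL : 0 ≤ L)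
    (hM : 0 ≤ M) (hβ : 0 < β) (hγ : 0 < γ) (hβγ : 1 < β + γ) (hxc : ContinuousOn x (Icc a b))
    (y₀ : ℝ) :
    ∃ Y : ℝ → ℝ, Y a = y₀ ∧ (∀ t ∈ Icc a b, RSIntegral g x a t (Y t - Y a)) ∧
      IsControlHolder Y U (L * (|g a| + (sewingConst (β + γ) + 1) * (M * V a b ^ γ))) β a b := by
  obtain ⟨I, hI⟩ : ∃ I, IsSewing (youngGerm g x) I a b := exists_isSewing fun t ht =>
    ⟨_, isSewingBound_youngGerm (hU.restrict le_rfl ht.2) (hV.restrict le_rfl ht.2)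
      (hx.restrict le_rfl ht.2) (hg.restrict le_rfl ht.2) hL hM hβ hγ hβγ ht.1⟩
  have hY := hI.add_const (y₀ - I a)
  exact ⟨_, add_sub_cancel _ _, fun t ht => (hY.restrict le_rfl ht.2).rsIntegral ht.1
    (hU.restrict le_rfl ht.2) (hV.restrict le_rfl ht.2) (hx.restrict le_rfl ht.2)
    (hg.restrict le_rfl ht.2) hL hM hβ hγ hβγ (hxc.mono (Icc_subset_Icc_right ht.2)),
    hY.isControlHolder hU hV hx hg hL hM hβ hγ hβγ⟩

end YoungIntegral

lemma abs_le_add_mul_rpow {F : ℝ → ℝ} {K α : ℝ} (hF : ∀ u v, |F u - F v| ≤ K * |u - v| ^ α)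
    (u : ℝ) : |F u| ≤ |F 0| + K * |u| ^ α := by
  have hu := hF u 0
  rw [sub_zero] at hu
  linarith [abs_sub_abs_le_abs_sub (F u) (F 0)]

lemma rpow_add_mul_rpow_le {u v α C : ℝ} (hu : 0 ≤ u) (hv : 0 ≤ v) (hα : 0 ≤ α) (hC : 0 ≤ C) :
    u ^ α + C * v ^ α ≤ (C + 1) * (u + v) ^ α := by
  have huv : u ^ α ≤ (u + v) ^ α := by gcongr; linarith
  have hvu : v ^ α ≤ (u + v) ^ α := by gcongr; linarith
  linarith [mul_le_mul_of_nonneg_left hvu hC]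

theorem picard_operator_bound_general (p α : ℝ) (hp : 0 < p) (hα : 0 < α) (hpα : p - 1 < α) :
    ∃ C : ℝ, 0 < C ∧ ∀ (a b : ℝ), a ≤ b → ∀ y₀ : ℝ, ∀ x : ℝ → ℝ,
      ContinuousOn x (Set.Icc a b) → pVar x p a b < ⊤ →
      ∀ (F : ℝ → ℝ) (K : ℝ), (∀ u v : ℝ, |F u - F v| ≤ K * |u - v| ^ α) →
      ∀ f : ℝ → ℝ, pVar f p a b < ⊤ →
      ∃ Tf : ℝ → ℝ,
        (∀ t ∈ Set.Icc a b, RSIntegral (fun s => F (f s)) x a t (Tf t - y₀)) ∧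
        pVar Tf p a b < ⊤ ∧
        |Tf a| + pVarNorm Tf p a b ≤
          C * K * pVarNorm x p a b * (|f a| + pVarNorm f p a b) ^ α
            + |y₀| + |F 0| * pVarNorm x p a b := by
  have hβγ : 1 < 1 / p + 1 / p * α := by
    rw [← mul_one_add, one_div_mul_eq_div, one_lt_div hp]
    linarith
  set C := sewingConst (1 / p + 1 / p * α)
  have hC : 0 < C := sewingConst_pos hβγ
  refine ⟨C + 2, by positivity, fun a b hab y₀ x hxc hx F K hF f hf => ?_⟩
  have hK : 0 ≤ K := (abs_nonneg _).trans (by simpa using hF 1 0)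
  have hU := isControl_pVar hp hx
  have hV := isControl_pVar hp hf
  have hFf := (isControlHolder_pVar hp hf).comp hV one_pos.le hα.le hK hF
  obtain ⟨Tf, rfl, hTf, hTU⟩ := exists_young_integral hU hV (isControlHolder_pVar hp hx) hFf
    one_pos.le (by positivity) (by positivity) (by positivity) hβγ hxc y₀
  have hx0 : 0 ≤ pVarNorm x p a b := Real.rpow_nonneg ENNReal.toReal_nonneg _
  have hf0 : 0 ≤ pVarNorm f p a b := Real.rpow_nonneg ENNReal.toReal_nonneg _
  rw [Real.rpow_mul ENNReal.toReal_nonneg, ← pVarNorm, Real.one_rpow, mul_one, one_mul] at hTU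
  refine ⟨Tf, hTf, (hTU.pVar_le hU hp (by positivity)).trans_lt ENNReal.ofReal_lt_top, ?_⟩
  calc |Tf a| + pVarNorm Tf p a b
    _ ≤ |Tf a| + (|F 0| + K * |f a| ^ α + (C + 1) * (K * pVarNorm f p a b ^ α)) *
          pVarNorm x p a b := by
        gcongr
        refine (hTU.pVarNorm_le hU hp (by positivity) hab).trans ?_
        rw [← pVarNorm]
        gcongr
        exact abs_le_add_mul_rpow hF _
    _ = |Tf a| + (|F 0| + K * (|f a| ^ α + (C + 1) * pVarNorm f p a b ^ α)) *
          pVarNorm x p a b := by ring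
    _ ≤ |Tf a| + (|F 0| + K * ((C + 1 + 1) * (|f a| + pVarNorm f p a b) ^ α)) *
          pVarNorm x p a b := by
        gcongr
        exact rpow_add_mul_rpow_le (abs_nonneg _) hf0 hα.le (by positivity)
    _ = _ := by ring

/-- Bound for the Picard-type operator `Tf(t) = y₀ + ∫_a^t F(f(s)) dx(s)`:
`|Tf(a)| + ‖Tf‖_{p-var} ≤ C·K·‖x‖_{p-var}·(|f(a)| + ‖f‖_{p-var})^α + |y₀| + |F(0)|·‖x‖_{p-var}`. -/
theorem picard_operator_bound
    (p α : ℝ) (hp : 1 < p) (hp2 : p < 2) (hα1 : p - 1 < α) (hα2 : α < 1) :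
    ∃ C : ℝ, 0 < C ∧ ∀ (a b : ℝ), a < b → ∀ y₀ : ℝ, ∀ x : ℝ → ℝ,
      ContinuousOn x (Set.Icc a b) → pVar x p a b < ⊤ →
      ∀ (F : ℝ → ℝ) (K : ℝ), 0 ≤ K → (∀ u v : ℝ, |F u - F v| ≤ K * |u - v| ^ α) →
      ∀ f : ℝ → ℝ, pVar f p a b < ⊤ →
      ∃ Tf : ℝ → ℝ,
        (∀ t ∈ Set.Icc a b, RSIntegral (fun s => F (f s)) x a t (Tf t - y₀)) ∧
        pVar Tf p a b < ⊤ ∧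
        |Tf a| + pVarNorm Tf p a b ≤
          C * K * pVarNorm x p a b * (|f a| + pVarNorm f p a b) ^ α
            + |y₀| + |F 0| * pVarNorm x p a b := by
  obtain ⟨C, hC, hbound⟩ :=
    picard_operator_bound_general p α (by linarith) (by linarith) hα1
  exact ⟨C, hC, fun a b hab y₀ x hxc hx F K _ => hbound a b hab.le y₀ x hxc hx F K⟩
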